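/- arXiv:1607.04728 — 2 statements merged into one kernel-verified Lean document; each statement's English description precedes it below -/
import Mathlib

section
/- Let α ≥ 0 be a real number and T ⊆ A* a language with p*_T(n) = O(n^{α+1}). Then there exists a language S ⊆ A* with p_S(n) = O(n^α) such that T ⊆ S^2. -/
open scoped ENNReal Pointwise

universe u

variable {A : Type u}

/-- The factor of `x` of length `n` starting at position `i`. -/
def wordSeg (x : ℕ → A) (i n : ℕ) : List A := (List.range n).map fun j => x (i + j)

/-- The set of finite factors of a one-sided infinite word (including the empty word). -/
def Fac (x : ℕ → A) : Set (List A) := {u | ∃ i n, u = wordSeg x i n}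

/-- The factor of a two-sided word `x` of length `n` starting at position `i`. -/
def wordSegZ (x : ℤ → A) (i : ℤ) (n : ℕ) : List A := (List.range n).map fun j => x (i + j)

/-- The set of finite factors of a two-sided infinite word (including the empty word). -/
def FacZ (x : ℤ → A) : Set (List A) := {u | ∃ (i : ℤ) (n : ℕ), u = wordSegZ x i n}

/-- The complexity of a language: the number of words of length `n` in it. -/
noncomputable def complexity (L : Set (List A)) (n : ℕ) : ℕ :=
  {u ∈ L | u.length = n}.ncard

/-- The accumulative complexity `p*_L(n) = Σ_{i=0}^{n} p_L(i)`. -/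
noncomputable def accComplexity (L : Set (List A)) (n : ℕ) : ℕ :=
  ∑ i ∈ Finset.range (n + 1), complexity L i

/-- Concatenation (product) of two languages. -/
def prodL (S T : Set (List A)) : Set (List A) := {w | ∃ s ∈ S, ∃ t ∈ T, w = s ++ t}

/-- `powL S k` = `S^k`, the set of concatenations of `k` elements of `S`. -/
def powL (S : Set (List A)) : ℕ → Set (List A)
  | 0 => {([] : List A)}
  | k + 1 => prodL (powL S k) S

/-- `f(n) = O(n^α)`. -/
def PolyBound (f : ℕ → ℕ) (α : ℝ) : Prop :=
  ∃ C : ℝ, ∀ n : ℕ, 1 ≤ n → (f n : ℝ) ≤ C * (n : ℝ) ^ α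

/-- The `α`-dimension `d_α(L)`: infimum of the integers `k ≥ 1` such that `L ⊆ S^k`
for some language `S` with `p_S(n) = O(n^α)`, with `inf ∅ = ⊤`. -/
noncomputable def polyDim (α : ℝ) (L : Set (List A)) : ℕ∞ :=
  sInf {k : ℕ∞ | ∃ m : ℕ, k = m ∧ 1 ≤ m ∧
    ∃ S : Set (List A), PolyBound (complexity S) α ∧ L ⊆ powL S m}

/-- The accumulative `α`-dimension `d*_α(L)`. -/
noncomputable def polyDimStar (α : ℝ) (L : Set (List A)) : ℕ∞ :=
  sInf {k : ℕ∞ | ∃ m : ℕ, k = m ∧ 1 ≤ m ∧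
    ∃ S : Set (List A), PolyBound (accComplexity S) α ∧ L ⊆ powL S m}

/-- The cost `c(L)`: infimum of the `α ≥ 0` with `d_α(L) < +∞`, with `inf ∅ = ⊤`. -/
noncomputable def cost (L : Set (List A)) : ℝ≥0∞ :=
  sInf {a : ℝ≥0∞ | ∃ α : ℝ, 0 ≤ α ∧ a = ENNReal.ofReal α ∧ polyDim α L ≠ ⊤}

/-- A one-sided word is ultimately periodic if it is of the form `u v v v ⋯`. -/
def UltimatelyPeriodic (x : ℕ → A) : Prop :=
  ∃ N p : ℕ, 0 < p ∧ ∀ n : ℕ, N ≤ n → x (n + p) = x n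

/-- A two-sided word is eventually periodic if it is periodic far enough to the right
and far enough to the left. -/
def EventuallyPeriodicZ (x : ℤ → A) : Prop :=
  (∃ p : ℕ, 0 < p ∧ ∃ N : ℤ, ∀ n : ℤ, N ≤ n → x (n + p) = x n) ∧
  (∃ p : ℕ, 0 < p ∧ ∃ N : ℤ, ∀ n : ℤ, n ≤ N → x (n - p) = x n)

/-- A one-sided word is recurrent if each of its factors occurs infinitely often. -/
def Recurrent (x : ℕ → A) : Prop :=
  ∀ u ∈ Fac x, ∀ N : ℕ, ∃ i : ℕ, N ≤ i ∧ u = wordSeg x i u.length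

/-- `u` is a right special factor for the language `F`. -/
def RightSpecial (F : Set (List A)) (u : List A) : Prop :=
  u ∈ F ∧ ∃ a b : A, a ≠ b ∧ u ++ [a] ∈ F ∧ u ++ [b] ∈ F

/-- `M` is a `D`-marker set for a word with factor set `F`: every factor of length
at least `D n` contains a factor of length `n` belonging to `M`. -/
def MarkerSet (D : ℕ) (M F : Set (List A)) : Prop :=
  ∀ n : ℕ, 1 ≤ n → ∀ u ∈ F, D * n ≤ u.length →
    ∃ v ∈ M, v.length = n ∧ v <:+: u

/-- A language is factorial if it contains all factors of its members. -/
def IsFactorial (S : Set (List A)) : Prop := ∀ u ∈ S, ∀ v : List A, v <:+: u → v ∈ S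

/-- The bound `Σ_{k ∈ I_n ∩ ℕ} p_M(2^k)(1 + 4 p(3n)/2^k)` where
`I_n = (log₂(n/(2D)), log₂(2n)]`, i.e. the sum is over natural `k` with
`n/(2D) < 2^k ≤ 2n`. -/
noncomputable def markerBound (M F : Set (List A)) (D n : ℕ) : ℝ :=
  ∑ k ∈ (Finset.range (2 * n + 2)).filter (fun k => n < 2 * D * 2 ^ k ∧ 2 ^ k ≤ 2 * n),
    (complexity M (2 ^ k) : ℝ) * (1 + 4 * (complexity F (3 * n) : ℝ) / 2 ^ k)

-- The word `u = ∏_{i=1}^{∞} a b^i = a b a b b a b b b ⋯` over `{a,b}`, with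
-- `a = false`, `b = true`: position `n` carries an `a` iff `n = (i-1)(i+2)/2` for some
-- `i ≥ 1`, i.e. iff `2n = m(m+3)` for some `m ≥ 0`.
open Classical in
noncomputable def uWord (n : ℕ) : Bool :=
  if ∃ m : ℕ, 2 * n = m * (m + 3) then false else true

/-!
List the words of `T` by nondecreasing length, and let `r w` be the position of `w` in the list, so
that `r w < p*_T(|w|)`. Take `h` to be a power of `2` comparable to `|w| / 3` and cut `w` after
`2h - 2 - (r w mod h)` letters; both pieces then have length comparable to `h`. Along a run of words
sharing `h` and `⌊r w / h⌋`, the prefixes get strictly shorter while the words do not, so the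
suffixes get strictly longer. Hence a piece length `n` determines `w` up to the choice of `h`, for
which there are at most three possibilities, and of `⌊r w / h⌋ = O(p*_T(6n + 6) / (n + 1))`.
-/

section Complexity

/-- A language is locally finite if it has finitely many words of each length. Only then does
`complexity`, being an `ncard`, really count words. -/
def IsLocallyFinite (L : Set (List A)) : Prop := ∀ n, {u ∈ L | u.length = n}.Finite

theorem IsLocallyFinite.union {L M : Set (List A)} (hL : IsLocallyFinite L)
    (hM : IsLocallyFinite M) : IsLocallyFinite (L ∪ M) := fun n =>
  ((hL n).union (hM n)).subset fun _ hu => hu.1.imp (⟨·, hu.2⟩) (⟨·, hu.2⟩)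

theorem complexity_union_le {L M : Set (List A)} (hL : IsLocallyFinite L)
    (hM : IsLocallyFinite M) (n : ℕ) :
    complexity (L ∪ M) n ≤ complexity L n + complexity M n :=
  (Set.ncard_le_ncard (fun _ hu => hu.1.imp (⟨·, hu.2⟩) (⟨·, hu.2⟩))
    ((hL n).union (hM n))).trans (Set.ncard_union_le _ _)

theorem accComplexity_mono (L : Set (List A)) : Monotone (accComplexity L) := fun _ _ h =>
  Finset.sum_le_sum_of_subset (Finset.range_subset_range.2 (Nat.succ_le_succ h))

theorem append_mem_powL_two {S : Set (List A)} {s t : List A} (hs : s ∈ S) (ht : t ∈ S) :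
    s ++ t ∈ powL S 2 :=
  ⟨s, ⟨[], rfl, s, hs, rfl⟩, t, ht, rfl⟩

end Complexity

section LengthRank

/-- `r` ranks the words of `L` by nondecreasing length, with ties broken arbitrarily: `r w` is the
position of `w` in such an enumeration, up to gaps. -/
structure IsLengthRank (L : Set (List A)) (r : List A → ℕ) : Prop where
  injOn : Set.InjOn r L
  length_le : ∀ v ∈ L, ∀ w ∈ L, r v ≤ r w → v.length ≤ w.length
  lt_accComplexity : ∀ w ∈ L, r w < accComplexity L w.length

theorem IsLocallyFinite.exists_isLengthRank {L : Set (List A)} (hL : IsLocallyFinite L) :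
    ∃ r, IsLengthRank L r := by
  have exists_index (n : ℕ) : ∃ e : List A → ℕ,
      {u ∈ L | u.length = n} ⊆ e ⁻¹' Set.Iio (complexity L n) ∧
        Set.InjOn e {u ∈ L | u.length = n} :=
    (hL n).exists_injOn_of_encard_le (by
      rw [← (hL n).cast_ncard_eq, ← (Set.finite_Iio _).cast_ncard_eq, ← Finset.coe_Iio,
        Set.ncard_coe_finset, Nat.card_Iio, complexity])
  choose e he_lt he_inj using exists_index
  set r : List A → ℕ := fun w =>
    ∑ i ∈ Finset.range w.length, complexity L i + e w.length w with hr
  have r_lt (w) (hw : w ∈ L) : r w < accComplexity L w.length := by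
    rw [accComplexity, Finset.sum_range_succ]
    exact Nat.add_lt_add_left (he_lt _ ⟨hw, rfl⟩) _
  have length_le (v w) (hw : w ∈ L) (hvw : r v ≤ r w) : v.length ≤ w.length := by
    by_contra! hlt
    have : accComplexity L w.length ≤ r v :=
      (Finset.sum_le_sum_of_subset (Finset.range_subset_range.2 hlt)).trans (Nat.le_add_right _ _)
    exact (r_lt w hw).not_ge (this.trans hvw)
  refine ⟨r, fun v hv w hw hvw => ?_, fun v _ => length_le v, r_lt⟩
  have hlen : v.length = w.length :=
    (length_le v w hw hvw.le).antisymm (length_le w v hv hvw.ge)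
  refine he_inj w.length ⟨hv, hlen⟩ ⟨hw, rfl⟩ ?_
  simpa only [hr, hlen, Nat.add_left_cancel_iff] using hvw

end LengthRank

section Cut

/-- The exponent of the dyadic scale `h = 2 ^ cutExponent l` at which a word of length `l` is cut:
the largest one with `3 * h ≤ l + 3`. -/
def cutExponent (l : ℕ) : ℕ := Nat.log 2 (l / 3 + 1)

/-- The length of the prefix cut off from a word of length `l` and rank `r`. -/
def cutPos (r l : ℕ) : ℕ := 2 * 2 ^ cutExponent l - 2 - r % 2 ^ cutExponent l

theorem three_mul_two_pow_cutExponent_le (l : ℕ) : 3 * 2 ^ cutExponent l ≤ l + 3 := by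
  have : 2 ^ cutExponent l ≤ l / 3 + 1 := Nat.pow_log_le_self 2 (Nat.succ_ne_zero _)
  omega

theorem add_three_lt_six_mul_two_pow_cutExponent (l : ℕ) : l + 3 < 6 * 2 ^ cutExponent l := by
  have : l / 3 + 1 < 2 ^ (cutExponent l + 1) := Nat.lt_pow_succ_log_self one_lt_two _
  omega

theorem cutPos_add_mod (r l : ℕ) :
    cutPos r l + r % 2 ^ cutExponent l + 2 = 2 * 2 ^ cutExponent l := by
  have : r % 2 ^ cutExponent l < 2 ^ cutExponent l := Nat.mod_lt _ (Nat.two_pow_pos _)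
  rw [cutPos]
  omega

theorem two_pow_cutExponent_le_cutPos (r l : ℕ) : 2 ^ cutExponent l ≤ cutPos r l + 1 := by
  have := cutPos_add_mod r l
  have : r % 2 ^ cutExponent l < 2 ^ cutExponent l := Nat.mod_lt _ (Nat.two_pow_pos _)
  omega

theorem two_pow_cutExponent_add_cutPos_le (r l : ℕ) :
    2 ^ cutExponent l + cutPos r l ≤ l + 1 := by
  have := cutPos_add_mod r l
  have := three_mul_two_pow_cutExponent_le l
  omega

theorem cutPos_le (r l : ℕ) : cutPos r l ≤ l := by
  have := two_pow_cutExponent_add_cutPos_le r l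
  have := Nat.two_pow_pos (cutExponent l)
  omega

theorem rank_eq_of_cutPos_eq {r r' l l' : ℕ} (hexp : cutExponent l = cutExponent l')
    (hdiv : r / 2 ^ cutExponent l = r' / 2 ^ cutExponent l')
    (hcut : cutPos r l = cutPos r' l') : r = r' := by
  have h := cutPos_add_mod r l
  have h' := cutPos_add_mod r' l'
  rw [hexp] at h hdiv
  rw [← Nat.div_add_mod r (2 ^ cutExponent l'), hdiv,
    show r % 2 ^ cutExponent l' = r' % 2 ^ cutExponent l' by omega, Nat.div_add_mod]

theorem cutPos_anti {r r' l l' : ℕ} (hexp : cutExponent l = cutExponent l')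
    (hdiv : r / 2 ^ cutExponent l = r' / 2 ^ cutExponent l') (hr : r ≤ r') :
    cutPos r' l' ≤ cutPos r l := by
  have h := cutPos_add_mod r l
  have h' := cutPos_add_mod r' l'
  rw [hexp] at h hdiv
  have hdm := Nat.div_add_mod r (2 ^ cutExponent l')
  have hdm' := Nat.div_add_mod r' (2 ^ cutExponent l')
  rw [hdiv] at hdm
  omega

theorem rank_eq_of_sub_cutPos_eq {r r' l l' : ℕ} (hexp : cutExponent l = cutExponent l')
    (hdiv : r / 2 ^ cutExponent l = r' / 2 ^ cutExponent l')
    (hr : r ≤ r') (hl : l ≤ l') (hcut : l - cutPos r l = l' - cutPos r' l') : r = r' := by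
  refine rank_eq_of_cutPos_eq hexp hdiv ?_
  have := cutPos_anti hexp hdiv hr
  have := cutPos_le r l
  have := cutPos_le r' l'
  omega

/-- The first piece of `w` when `r` supplies the ranks. -/
def cutPrefix (r : List A → ℕ) (w : List A) : List A := w.take (cutPos (r w) w.length)

/-- The second piece of `w` when `r` supplies the ranks. -/
def cutSuffix (r : List A → ℕ) (w : List A) : List A := w.drop (cutPos (r w) w.length)

theorem cutPrefix_append_cutSuffix (r : List A → ℕ) (w : List A) :
    cutPrefix r w ++ cutSuffix r w = w :=
  List.take_append_drop _ _

theorem length_cutPrefix (r : List A → ℕ) (w : List A) :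
    (cutPrefix r w).length = cutPos (r w) w.length :=
  List.length_take_of_le (cutPos_le _ _)

theorem length_cutSuffix (r : List A → ℕ) (w : List A) :
    (cutSuffix r w).length = w.length - cutPos (r w) w.length :=
  List.length_drop

end Cut

section Counting

theorem finite_and_ncard_le_of_injOn_dyadic {ι : Type*} {P : Set ι} {k m : ι → ℕ} {N M c : ℕ}
    (hinj : Set.InjOn (fun w => (k w, m w)) P) (hle : ∀ w ∈ P, 2 ^ k w ≤ N)
    (hlt : ∀ w ∈ P, N < 2 ^ (k w + c)) (hm : ∀ w ∈ P, m w ≤ M) :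
    P.Finite ∧ P.ncard ≤ c * (M + 1) := by
  set box : Finset (ℕ × ℕ) :=
    Finset.Ico (Nat.log 2 N + 1 - c) (Nat.log 2 N + 1) ×ˢ Finset.range (M + 1) with hbox
  have mapsTo : Set.MapsTo (fun w => (k w, m w)) P box := fun w hw => by
    have hN : N ≠ 0 := ((Nat.two_pow_pos _).trans_le (hle w hw)).ne'
    have hk : k w ≤ Nat.log 2 N := Nat.le_log_of_pow_le one_lt_two (hle w hw)
    have hkc : Nat.log 2 N < k w + c := Nat.log_lt_of_lt_pow hN (hlt w hw)
    have := hm w hw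
    simp only [hbox, Finset.mem_coe, Finset.mem_product, Finset.mem_Ico, Finset.mem_range]
    omega
  refine ⟨.of_injOn mapsTo hinj box.finite_toSet, ?_⟩
  calc P.ncard ≤ (box : Set (ℕ × ℕ)).ncard := Set.ncard_le_ncard_of_injOn _ mapsTo hinj
    _ = (Nat.log 2 N + 1 - (Nat.log 2 N + 1 - c)) * (M + 1) := by
      rw [Set.ncard_coe_finset, hbox, Finset.card_product, Nat.card_Ico, Finset.card_range]
    _ ≤ c * (M + 1) := Nat.mul_le_mul_right _ (by omega)

variable {L : Set (List A)} {r : List A → ℕ}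

theorem IsLengthRank.div_le (hr : IsLengthRank L r) {w : List A} (hw : w ∈ L) {n : ℕ}
    (hle : 2 ^ cutExponent w.length ≤ n + 1) (hge : n + 1 ≤ 5 * 2 ^ cutExponent w.length) :
    r w / 2 ^ cutExponent w.length ≤ 5 * accComplexity L (6 * (n + 1)) / (n + 1) := by
  set h := 2 ^ cutExponent w.length
  have length_le : w.length ≤ 6 * (n + 1) := by
    have := add_three_lt_six_mul_two_pow_cutExponent w.length
    omega
  rw [Nat.le_div_iff_mul_le n.succ_pos]
  calc r w / h * (n + 1) ≤ r w / h * (5 * h) := Nat.mul_le_mul_left _ hge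
    _ = 5 * (r w / h * h) := by ring
    _ ≤ 5 * r w := Nat.mul_le_mul_left _ (Nat.div_mul_le_self _ _)
    _ ≤ 5 * accComplexity L (6 * (n + 1)) :=
      Nat.mul_le_mul_left _ <|
        (hr.lt_accComplexity w hw).le.trans (accComplexity_mono L length_le)

theorem IsLengthRank.isLocallyFinite_image_and_complexity_le (hr : IsLengthRank L r)
    {piece : List A → List A}
    (hge : ∀ w, 2 ^ cutExponent w.length ≤ (piece w).length + 1)
    (hle : ∀ w, (piece w).length + 1 ≤ 5 * 2 ^ cutExponent w.length)
    (hinj : ∀ v ∈ L, ∀ w ∈ L, cutExponent v.length = cutExponent w.length →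
      r v / 2 ^ cutExponent v.length = r w / 2 ^ cutExponent w.length →
      (piece v).length = (piece w).length → v = w) :
    IsLocallyFinite (piece '' L) ∧ ∀ n,
      complexity (piece '' L) n ≤ 3 * (5 * accComplexity L (6 * (n + 1)) / (n + 1) + 1) := by
  refine forall_and.1 fun n => ?_
  set P := {w ∈ L | (piece w).length = n}
  have image_eq : {u ∈ piece '' L | u.length = n} = piece '' P := by
    ext u
    constructor
    · rintro ⟨⟨w, hw, rfl⟩, hn⟩
      exact ⟨w, ⟨hw, hn⟩, rfl⟩
    · rintro ⟨w, ⟨hw, hn⟩, rfl⟩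
      exact ⟨⟨w, hw, rfl⟩, hn⟩
  have scale_le (w) (hw : w ∈ P) : 2 ^ cutExponent w.length ≤ n + 1 := hw.2 ▸ hge w
  have le_scale (w) (hw : w ∈ P) : n + 1 ≤ 5 * 2 ^ cutExponent w.length := hw.2 ▸ hle w
  have lt_scale (w) (hw : w ∈ P) : n + 1 < 2 ^ (cutExponent w.length + 3) := by
    have := le_scale w hw
    have := Nat.two_pow_pos (cutExponent w.length)
    rw [pow_add]
    omega
  have injOn : Set.InjOn
      (fun w => (cutExponent w.length, r w / 2 ^ cutExponent w.length)) P :=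
    fun v hv w hw hvw => hinj v hv.1 w hw.1 (congrArg Prod.fst hvw) (congrArg Prod.snd hvw)
      (hv.2.trans hw.2.symm)
  obtain ⟨hfin, hcard⟩ := finite_and_ncard_le_of_injOn_dyadic injOn scale_le lt_scale
    fun w hw => hr.div_le hw.1 (scale_le w hw) (le_scale w hw)
  rw [complexity, image_eq]
  exact ⟨hfin.image _, (Set.ncard_image_le hfin).trans hcard⟩

theorem IsLengthRank.isLocallyFinite_cutPrefix_and_complexity_le (hr : IsLengthRank L r) :
    IsLocallyFinite (cutPrefix r '' L) ∧ ∀ n,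
      complexity (cutPrefix r '' L) n ≤
        3 * (5 * accComplexity L (6 * (n + 1)) / (n + 1) + 1) := by
  refine hr.isLocallyFinite_image_and_complexity_le (fun w => ?_) (fun w => ?_)
    fun v hv w hw hexp hdiv hlen => ?_
  · rw [length_cutPrefix]
    exact two_pow_cutExponent_le_cutPos _ _
  · rw [length_cutPrefix]
    have := cutPos_add_mod (r w) w.length
    omega
  · rw [length_cutPrefix, length_cutPrefix] at hlen
    exact hr.injOn hv hw (rank_eq_of_cutPos_eq hexp hdiv hlen)

theorem IsLengthRank.isLocallyFinite_cutSuffix_and_complexity_le (hr : IsLengthRank L r) :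
    IsLocallyFinite (cutSuffix r '' L) ∧ ∀ n,
      complexity (cutSuffix r '' L) n ≤
        3 * (5 * accComplexity L (6 * (n + 1)) / (n + 1) + 1) := by
  refine hr.isLocallyFinite_image_and_complexity_le (fun w => ?_) (fun w => ?_)
    fun v hv w hw hexp hdiv hlen => ?_
  · rw [length_cutSuffix]
    have := two_pow_cutExponent_add_cutPos_le (r w) w.length
    omega
  · rw [length_cutSuffix]
    have := two_pow_cutExponent_le_cutPos (r w) w.length
    have := add_three_lt_six_mul_two_pow_cutExponent w.length
    omega
  · rw [length_cutSuffix, length_cutSuffix] at hlen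
    refine hr.injOn hv hw ?_
    rcases le_total (r v) (r w) with hvw | hwv
    · exact rank_eq_of_sub_cutPos_eq hexp hdiv hvw (hr.length_le v hv w hw hvw) hlen
    · exact (rank_eq_of_sub_cutPos_eq hexp.symm hdiv.symm hwv (hr.length_le w hw v hv hwv)
        hlen.symm).symm

theorem IsLocallyFinite.exists_subset_powL_two {L : Set (List A)} (hL : IsLocallyFinite L) :
    ∃ S : Set (List A), IsLocallyFinite S ∧ L ⊆ powL S 2 ∧
      ∀ n, complexity S n ≤ 6 * (5 * accComplexity L (6 * (n + 1)) / (n + 1) + 1) := by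
  obtain ⟨r, hr⟩ := hL.exists_isLengthRank
  obtain ⟨finite_prefix, prefix_le⟩ := hr.isLocallyFinite_cutPrefix_and_complexity_le
  obtain ⟨finite_suffix, suffix_le⟩ := hr.isLocallyFinite_cutSuffix_and_complexity_le
  refine ⟨cutPrefix r '' L ∪ cutSuffix r '' L, finite_prefix.union finite_suffix,
    fun w hw => ?_, fun n => ?_⟩
  · rw [← cutPrefix_append_cutSuffix r w]
    exact append_mem_powL_two (.inl ⟨w, hw, rfl⟩) (.inr ⟨w, hw, rfl⟩)
  · have := complexity_union_le finite_prefix finite_suffix n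
    have := prefix_le n
    have := suffix_le n
    omega

end Counting

section PolyBound

theorem PolyBound.exists_nonneg {f : ℕ → ℕ} {α : ℝ} (hf : PolyBound f α) :
    ∃ C : ℝ, 0 ≤ C ∧ ∀ n : ℕ, 1 ≤ n → (f n : ℝ) ≤ C * (n : ℝ) ^ α := by
  obtain ⟨C, hC⟩ := hf
  refine ⟨C, ?_, hC⟩
  simpa only [Nat.cast_one, Real.one_rpow, mul_one] using
    (Nat.cast_nonneg (f 1)).trans (hC 1 le_rfl)

theorem PolyBound.of_le_mul_div_add_one {f g : ℕ → ℕ} {α : ℝ} (hα : 0 ≤ α)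
    (hg : PolyBound g (α + 1)) {a b c : ℕ} (hc : 0 < c)
    (hf : ∀ n, f n ≤ a * (b * g (c * (n + 1)) / (n + 1) + 1)) : PolyBound f α := by
  obtain ⟨C, hC0, hC⟩ := hg.exists_nonneg
  refine ⟨a * (b * (C * c ^ (α + 1) * 2 ^ α) + 1), fun n hn => ?_⟩
  have one_le_rpow : 1 ≤ (n : ℝ) ^ α := Real.one_le_rpow (mod_cast hn) hα
  have succ_rpow_le : ((n + 1 : ℕ) : ℝ) ^ α ≤ 2 ^ α * (n : ℝ) ^ α := by
    rw [← Real.mul_rpow zero_le_two n.cast_nonneg]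
    exact Real.rpow_le_rpow (Nat.cast_nonneg _) (mod_cast (by omega : n + 1 ≤ 2 * n)) hα
  have g_div_le : (g (c * (n + 1)) : ℝ) / (n + 1 : ℕ) ≤
      C * c ^ (α + 1) * 2 ^ α * (n : ℝ) ^ α := by
    rw [div_le_iff₀ (mod_cast n.succ_pos)]
    calc (g (c * (n + 1)) : ℝ) ≤ C * ((c * (n + 1) : ℕ) : ℝ) ^ (α + 1) :=
          hC _ (Nat.mul_pos hc n.succ_pos)
      _ = C * c ^ (α + 1) * ((n + 1 : ℕ) : ℝ) ^ α * (n + 1 : ℕ) := by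
        rw [Nat.cast_mul, Real.mul_rpow c.cast_nonneg (Nat.cast_nonneg _),
          Real.rpow_add_one (Nat.cast_ne_zero.2 n.succ_ne_zero) α]
        ring
      _ ≤ C * c ^ (α + 1) * (2 ^ α * (n : ℝ) ^ α) * (n + 1 : ℕ) := by gcongr
      _ = C * c ^ (α + 1) * 2 ^ α * (n : ℝ) ^ α * (n + 1 : ℕ) := by ring
  calc (f n : ℝ) ≤ a * ((b * g (c * (n + 1)) / (n + 1) : ℕ) + 1) := mod_cast hf n
    _ ≤ a * (b * (g (c * (n + 1)) / (n + 1 : ℕ)) + 1) := by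
      gcongr
      refine Nat.cast_div_le.trans_eq ?_
      rw [Nat.cast_mul, mul_div_assoc]
    _ ≤ a * (b * (C * c ^ (α + 1) * 2 ^ α * (n : ℝ) ^ α) + (n : ℝ) ^ α) := by gcongr
    _ = a * (b * (C * c ^ (α + 1) * 2 ^ α) + 1) * (n : ℝ) ^ α := by ring

end PolyBound

theorem stmt5_general {α : ℝ} (hα : 0 ≤ α) (T : Set (List A)) (hfin : IsLocallyFinite T)
    (hT : PolyBound (accComplexity T) (α + 1)) :
    ∃ S : Set (List A), IsLocallyFinite S ∧ PolyBound (complexity S) α ∧ T ⊆ powL S 2 := by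
  obtain ⟨S, hSfin, hTS, hS⟩ := hfin.exists_subset_powL_two
  exact ⟨S, hSfin, hT.of_le_mul_div_add_one hα (by norm_num) hS, hTS⟩

/-- if `p*_T(n) = O(n^{α+1})` then `T ⊆ S²` for some `S` with
`p_S(n) = O(n^α)`. -/
theorem stmt5 (A : Type u) [Fintype A] [Nonempty A] (α : ℝ) (hα : 0 ≤ α)
    (T : Set (List A)) (hT : PolyBound (accComplexity T) (α + 1)) :
    ∃ S : Set (List A), PolyBound (complexity S) α ∧ T ⊆ powL S 2 := by
  obtain ⟨S, -, hS, hTS⟩ := stmt5_general hα T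
    (fun n => (List.finite_length_eq A n).subset fun _ hu => hu.2) hT
  exact ⟨S, hS, hTS⟩
end

section
/- Let α ≥ 0 be a real number, k a positive integer, and L ⊆ A* a language such that L ⊆ S^k for some language S with p_S(n) = O(n^α). Then p_L(n) = O(n^{k(α+1)−1}). In particular, if x is an infinite word with Fac(x) ⊆ S^k for some S of bounded complexity, then p_x(n) = O(n^{k−1}). -/
open scoped ENNReal Pointwise

universe u

variable {A : Type u}

/-!
A word of length `n` in `S T` splits as `s ++ t` at one of `n + 1` places, so the complexity of
`S T` is at most the convolution of those of `S` and `T`. For `α, β ≥ 0`, a convolution of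
`O(n^α)` and `O(n^β)` is `O(n^{α+β+1})`: passing from `S^k` to `S^{k+1}`
raises the exponent by `α + 1`.
-/

section

open Finset.HasAntidiagonal (antidiagonal mem_antidiagonal)

/-- Local finiteness of a language: it has finitely many words of each length. Over an infinite
alphabet this excludes the junk value `Set.ncard = 0` of an infinite set in `complexity`. -/
def HasFiniteSlices (L : Set (List A)) : Prop := ∀ n : ℕ, {u ∈ L | u.length = n}.Finite

theorem hasFiniteSlices_of_finite [Finite A] (L : Set (List A)) : HasFiniteSlices L := fun n =>
  (List.finite_length_eq A n).subset fun _ hu => hu.2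

theorem complexity_mono {L M : Set (List A)} (hM : HasFiniteSlices M) (hLM : L ⊆ M) (n : ℕ) :
    complexity L n ≤ complexity M n :=
  Set.ncard_le_ncard (fun _ hu => ⟨hLM hu.1, hu.2⟩) (hM n)

theorem setOf_mem_prodL_length_eq (S T : Set (List A)) (n : ℕ) :
    {u ∈ prodL S T | u.length = n} =
      ⋃ ij ∈ antidiagonal n,
        (fun st : List A × List A => st.1 ++ st.2) ''
          ({s ∈ S | s.length = ij.1} ×ˢ {t ∈ T | t.length = ij.2}) := by
  ext u
  simp only [Set.mem_iUnion, mem_antidiagonal]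
  constructor
  · rintro ⟨⟨s, hs, t, ht, rfl⟩, hlen⟩
    exact ⟨(s.length, t.length), by simpa using hlen, (s, t), ⟨⟨hs, rfl⟩, ht, rfl⟩, rfl⟩
  · rintro ⟨ij, hij, ⟨s, t⟩, ⟨⟨hs, hsi⟩, ht, htj⟩, rfl⟩
    exact ⟨⟨s, hs, t, ht, rfl⟩, by simpa only [List.length_append, hsi, htj] using hij⟩

theorem HasFiniteSlices.prodL {S T : Set (List A)} (hS : HasFiniteSlices S)
    (hT : HasFiniteSlices T) : HasFiniteSlices (prodL S T) := fun n => by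
  rw [setOf_mem_prodL_length_eq]
  exact (Finset.finite_toSet _).biUnion fun ij _ => ((hS ij.1).prod (hT ij.2)).image _

theorem HasFiniteSlices.powL {S : Set (List A)} (hS : HasFiniteSlices S) :
    ∀ k : ℕ, HasFiniteSlices (powL S k)
  | 0 => fun _ => (Set.finite_singleton []).subset (Set.sep_subset _ _)
  | k + 1 => (hS.powL k).prodL hS

theorem complexity_prodL_le {S T : Set (List A)} (hS : HasFiniteSlices S)
    (hT : HasFiniteSlices T) (n : ℕ) :
    complexity (prodL S T) n ≤
      ∑ ij ∈ antidiagonal n, complexity S ij.1 * complexity T ij.2 := by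
  rw [complexity, setOf_mem_prodL_length_eq]
  refine (Finset.set_ncard_biUnion_le _ _).trans (Finset.sum_le_sum fun ij _ => ?_)
  exact (Set.ncard_image_le ((hS ij.1).prod (hT ij.2))).trans_eq Set.ncard_prod

theorem powL_one (S : Set (List A)) : powL S 1 = S := by
  simp [powL, prodL]

theorem PolyBound.mono {f g : ℕ → ℕ} {α : ℝ} (hg : PolyBound g α) (hfg : ∀ n, f n ≤ g n) :
    PolyBound f α :=
  let ⟨C, hC⟩ := hg
  ⟨C, fun n hn => (Nat.cast_le.2 (hfg n)).trans (hC n hn)⟩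

theorem PolyBound.of_forall_le {f : ℕ → ℕ} {C : ℕ} (hf : ∀ n, f n ≤ C) : PolyBound f 0 :=
  ⟨C, fun n _ => by simpa using hf n⟩

-- `PolyBound` says nothing about the value at `0`, which the constant `C` here has to absorb.
theorem PolyBound.exists_forall_le_of_le {f : ℕ → ℕ} {α : ℝ} (hα : 0 ≤ α)
    (hf : PolyBound f α) :
    ∃ C : ℝ, 0 ≤ C ∧ ∀ m n : ℕ, 1 ≤ n → m ≤ n → (f m : ℝ) ≤ C * (n : ℝ) ^ α := by
  obtain ⟨C, hC⟩ := hf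
  have hD : 0 ≤ max C (f 0) := le_max_of_le_right (Nat.cast_nonneg _)
  refine ⟨max C (f 0), hD, fun m n hn hmn => ?_⟩
  rcases Nat.eq_zero_or_pos m with rfl | hm
  · have one_le_pow : 1 ≤ (n : ℝ) ^ α := Real.one_le_rpow (by exact_mod_cast hn) hα
    exact (le_max_right _ _).trans (le_mul_of_one_le_right hD one_le_pow)
  · calc (f m : ℝ) ≤ C * (m : ℝ) ^ α := hC m hm
      _ ≤ max C (f 0) * (n : ℝ) ^ α := by
        gcongr
        exact le_max_left _ _

theorem PolyBound.sum_antidiagonal_mul {f g : ℕ → ℕ} {α β : ℝ} (hα : 0 ≤ α) (hβ : 0 ≤ β)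
    (hf : PolyBound f α) (hg : PolyBound g β) :
    PolyBound (fun n => ∑ ij ∈ antidiagonal n, f ij.1 * g ij.2) (α + β + 1) := by
  obtain ⟨C, hC, hfC⟩ := hf.exists_forall_le_of_le hα
  obtain ⟨D, -, hgD⟩ := hg.exists_forall_le_of_le hβ
  refine ⟨2 * (C * D), fun n hn => ?_⟩
  have term_le : ∀ ij ∈ antidiagonal n,
      (f ij.1 * g ij.2 : ℝ) ≤ C * (n : ℝ) ^ α * (D * (n : ℝ) ^ β) := fun ij hij =>
    mul_le_mul (hfC _ n hn (Finset.HasAntidiagonal.antidiagonal.fst_le hij))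
      (hgD _ n hn (Finset.HasAntidiagonal.antidiagonal.snd_le hij)) (by positivity) (by positivity)
  have bound_nonneg : 0 ≤ C * (n : ℝ) ^ α * (D * (n : ℝ) ^ β) :=
    le_trans (by positivity) (term_le (0, n) (by simp))
  have hn' : (1 : ℝ) ≤ n := by exact_mod_cast hn
  have hn_pos : (0 : ℝ) < n := by linarith
  push_cast
  calc ∑ ij ∈ antidiagonal n, (f ij.1 * g ij.2 : ℝ)
      ≤ (n + 1) * (C * (n : ℝ) ^ α * (D * (n : ℝ) ^ β)) := by
        simpa using Finset.sum_le_card_nsmul _ _ _ term_le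
    _ ≤ (2 * n) * (C * (n : ℝ) ^ α * (D * (n : ℝ) ^ β)) := by
        gcongr
        linarith
    _ = 2 * (C * D) * (n : ℝ) ^ (α + β + 1) := by
        rw [Real.rpow_add hn_pos, Real.rpow_add hn_pos, Real.rpow_one]
        ring

theorem PolyBound.complexity_prodL {S T : Set (List A)} {α β : ℝ} (hα : 0 ≤ α) (hβ : 0 ≤ β)
    (hS : HasFiniteSlices S) (hT : HasFiniteSlices T)
    (hSα : PolyBound (complexity S) α) (hTβ : PolyBound (complexity T) β) :
    PolyBound (complexity (prodL S T)) (α + β + 1) :=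
  (hSα.sum_antidiagonal_mul hα hβ hTβ).mono (complexity_prodL_le hS hT)

theorem PolyBound.complexity_powL {S : Set (List A)} {α : ℝ} (hα : 0 ≤ α)
    (hS : HasFiniteSlices S) (hSα : PolyBound (complexity S) α) {k : ℕ} (hk : 1 ≤ k) :
    PolyBound (complexity (powL S k)) (k * (α + 1) - 1) := by
  induction k, hk using Nat.le_induction with
  | base => simpa [powL_one] using hSα
  | succ k hk ih =>
    have exponent_nonneg : 0 ≤ k * (α + 1) - 1 := by
      have : (1 : ℝ) ≤ k := by exact_mod_cast hk
      nlinarith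
    have exponent_succ : ((k + 1 : ℕ) : ℝ) * (α + 1) - 1 = (k * (α + 1) - 1) + α + 1 := by
      push_cast
      ring
    rw [exponent_succ]
    exact ih.complexity_prodL exponent_nonneg hα (hS.powL k) hS hSα

theorem stmt6_general {α : ℝ} (hα : 0 ≤ α) {k : ℕ} (hk : 1 ≤ k) {L S : Set (List A)}
    (hS : HasFiniteSlices S) (hSα : PolyBound (complexity S) α) (hL : L ⊆ powL S k) :
    PolyBound (complexity L) (k * (α + 1) - 1) :=
  (hSα.complexity_powL hα hS hk).mono (complexity_mono (hS.powL k) hL)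

end

/-- if `L ⊆ S^k` with `p_S(n) = O(n^α)` then `p_L(n) = O(n^{k(α+1)-1})`;
in particular if `Fac(x) ⊆ S^k` with `S` of bounded complexity then
`p_x(n) = O(n^{k-1})`. -/
theorem stmt6 :
    (∀ (A : Type u) [Fintype A] [Nonempty A] (α : ℝ), 0 ≤ α → ∀ k : ℕ, 1 ≤ k →
      ∀ L S : Set (List A), PolyBound (complexity S) α → L ⊆ powL S k →
        PolyBound (complexity L) ((k : ℝ) * (α + 1) - 1)) ∧
    (∀ (A : Type u) [Fintype A] [Nonempty A] (x : ℕ → A) (k : ℕ), 1 ≤ k →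
      ∀ S : Set (List A), (∃ C : ℕ, ∀ n : ℕ, complexity S n ≤ C) → Fac x ⊆ powL S k →
        PolyBound (complexity (Fac x)) ((k : ℝ) - 1)) := by
  refine ⟨fun A _ _ α hα k hk L S hSα hL =>
    stmt6_general hα hk (hasFiniteSlices_of_finite S) hSα hL, ?_⟩
  rintro A _ _ x k hk S ⟨C, hC⟩ hx
  simpa using stmt6_general le_rfl hk (hasFiniteSlices_of_finite S) (.of_forall_le hC) hx
end
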